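/- Pointwise 1-type Gauss map of the first kind is equivalent to flat normal bundle: in the setting of a minimal Lorentzian surface x(s,t) = α(s) + β(t) in null coordinates, for every point (s,t) the following are equivalent: (a) ∂²ν/∂s∂t (s,t) is a real scalar multiple of ν(s,t); (b) η₁(s,t) ∧ η₂(s,t) = 0 in Λ²(ℝ⁴). In particular, there exists a smooth function f with Δν = f·ν on all of I₁ × I₂ if and only if η₁ ∧ η₂ vanishes identically. -/

import Mathlib

noncomputable section

/-- The Minkowski bilinear form on `ℝ⁴ = Fin 4 → ℝ`:
`B(v,w) = -v₀w₀ + v₁w₁ + v₂w₂ + v₃w₃`. -/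
def B4 (v w : Fin 4 → ℝ) : ℝ :=
  -(v 0 * w 0) + v 1 * w 1 + v 2 * w 2 + v 3 * w 3

/-- The wedge product `v ∧ w`, modelled concretely as the antisymmetric array
`(i,j) ↦ vᵢwⱼ - vⱼwᵢ` (a faithful model of the second exterior power `Λ²(ℝ⁴)`). -/
def wedge (v w : Fin 4 → ℝ) : Fin 4 → Fin 4 → ℝ :=
  fun i j => v i * w j - v j * w i

/-- Partial derivative of a two-parameter map with respect to the first variable. -/
def pds {E : Type*} [NormedAddCommGroup E] [NormedSpace ℝ E]
    (x : ℝ → ℝ → E) (s t : ℝ) : E :=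
  deriv (fun u => x u t) s

/-- Partial derivative of a two-parameter map with respect to the second variable. -/
def pdt {E : Type*} [NormedAddCommGroup E] [NormedSpace ℝ E]
    (x : ℝ → ℝ → E) (s t : ℝ) : E :=
  deriv (fun u => x s u) t

/-- `m²(s,t) = -B(α'(s), β'(t))`, the conformal factor of the induced metric
`-m²(ds⊗dt + dt⊗ds)` of the minimal Lorentzian surface `x(s,t) = α(s) + β(t)`. -/
def msq (α β : ℝ → Fin 4 → ℝ) (s t : ℝ) : ℝ :=
  -B4 (deriv α s) (deriv β t)

/-- `η₁ = h(∂s,∂s)`: the component of `x_{ss} = α''` orthogonal to the tangent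
plane `span{α'(s), β'(t)}`. -/
def eta1 (α β : ℝ → Fin 4 → ℝ) (s t : ℝ) : Fin 4 → ℝ :=
  deriv (deriv α) s
    - (B4 (deriv (deriv α) s) (deriv β t) / B4 (deriv α s) (deriv β t)) • deriv α s

/-- `η₂ = h(∂t,∂t)`: the component of `x_{tt} = β''` orthogonal to the tangent
plane `span{α'(s), β'(t)}`. -/
def eta2 (α β : ℝ → Fin 4 → ℝ) (s t : ℝ) : Fin 4 → ℝ :=
  deriv (deriv β) t
    - (B4 (deriv (deriv β) t) (deriv α s) / B4 (deriv α s) (deriv β t)) • deriv β t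

/-- The Gauss map `ν = (1/m²)·(α'(s) ∧ β'(t))`, valued in (a model of) `Λ²(ℝ⁴)`. -/
def gaussMap (α β : ℝ → Fin 4 → ℝ) (s t : ℝ) : Fin 4 → Fin 4 → ℝ :=
  (1 / msq α β s t) • wedge (deriv α s) (deriv β t)

/-- The Laplace–Beltrami operator of the induced metric `-m²(ds⊗dt + dt⊗ds)`
(with the sign convention of the paper) acting on `Λ²(ℝ⁴)`-valued maps:
`Δξ = (2/m²)·∂²ξ/∂s∂t`. -/
def lap (α β : ℝ → Fin 4 → ℝ) (ξ : ℝ → ℝ → (Fin 4 → Fin 4 → ℝ)) (s t : ℝ) :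
    Fin 4 → Fin 4 → ℝ :=
  (2 / msq α β s t) • pds (pdt ξ) s t

theorem B4_hasDerivAt_right (v : Fin 4 → ℝ) {b : ℝ → Fin 4 → ℝ} {q : Fin 4 → ℝ} {t : ℝ}
    (hb : HasDerivAt b q t) : HasDerivAt (fun u => B4 v (b u)) (B4 v q) t := by
  have h := fun i => (hasDerivAt_pi.1 hb) i
  unfold B4
  exact ((((h 0).const_mul (v 0)).neg.add ((h 1).const_mul (v 1))).add
    ((h 2).const_mul (v 2))).add ((h 3).const_mul (v 3))

theorem B4_comm' (v w : Fin 4 → ℝ) : B4 v w = B4 w v := by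
  unfold B4; ring

theorem B4_hasDerivAt_left (v : Fin 4 → ℝ) {b : ℝ → Fin 4 → ℝ} {q : Fin 4 → ℝ} {t : ℝ}
    (hb : HasDerivAt b q t) : HasDerivAt (fun u => B4 (b u) v) (B4 q v) t := by
  simp only [fun x => B4_comm' x v]
  exact B4_hasDerivAt_right v hb

theorem gauss_dt (a : Fin 4 → ℝ) {b : ℝ → Fin 4 → ℝ} {q : Fin 4 → ℝ} {t : ℝ}
    (hb : HasDerivAt b q t) (hD : B4 a (b t) ≠ 0) :
    HasDerivAt (fun u => (1 / (-B4 a (b u))) • wedge a (b u))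
      (fun i j => -(wedge a q i j) / B4 a (b t)
        + B4 a q * wedge a (b t) i j / (B4 a (b t)) ^ 2) t := by
  rw [hasDerivAt_pi]; intro i
  rw [hasDerivAt_pi]; intro j
  have h := fun i => (hasDerivAt_pi.1 hb) i
  have hB := B4_hasDerivAt_right a hb
  have hw : HasDerivAt (fun u => wedge a (b u) i j) (wedge a q i j) t :=
    ((h j).const_mul (a i)).sub ((h i).const_mul (a j))
  have := (hw.div hB.neg (neg_ne_zero.2 hD))
  refine (this.congr_of_eventuallyEq (Filter.Eventually.of_forall fun u => ?_)).congr_deriv ?_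
  · simp [div_eq_mul_inv]; ring
  · simp only [Pi.neg_apply]
    field_simp
    ring

theorem gauss_ds {a : ℝ → Fin 4 → ℝ} (b q : Fin 4 → ℝ) {p : Fin 4 → ℝ} {s : ℝ}
    (ha : HasDerivAt a p s) (hD : B4 (a s) b ≠ 0) :
    HasDerivAt (fun u => (fun i j => -(wedge (a u) q i j) / B4 (a u) b
        + B4 (a u) q * wedge (a u) b i j / (B4 (a u) b) ^ 2 : Fin 4 → Fin 4 → ℝ))
      (fun i j => -(wedge p q i j) / B4 (a s) b
        + B4 p b * wedge (a s) q i j / (B4 (a s) b) ^ 2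
        + B4 (a s) q * wedge p b i j / (B4 (a s) b) ^ 2
        + (B4 p q / (B4 (a s) b) ^ 2
          - 2 * B4 (a s) q * B4 p b / (B4 (a s) b) ^ 3) * wedge (a s) b i j) s := by
  rw [hasDerivAt_pi]; intro i
  rw [hasDerivAt_pi]; intro j
  have h := fun i => (hasDerivAt_pi.1 ha) i
  have hw : ∀ w, HasDerivAt (fun u => wedge (a u) w i j) (wedge p w i j) s := fun w =>
    ((h i).mul_const (w j)).sub ((h j).mul_const (w i))
  have hB := B4_hasDerivAt_left b ha
  have := ((hw q).neg.div hB hD).add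
    (((B4_hasDerivAt_left q ha).mul (hw b)).div (hB.pow 2) (pow_ne_zero 2 hD))
  refine this.congr_deriv ?_
  simp only [Pi.neg_apply, Pi.mul_apply, Pi.pow_apply]
  field_simp
  ring

theorem smooth_deriv {I : Set ℝ} (hI : IsOpen I) {α : ℝ → Fin 4 → ℝ}
    (hα : ContDiffOn ℝ (⊤ : ℕ∞) α I) : ContDiffOn ℝ (⊤ : ℕ∞) (deriv α) I :=
  ((contDiffOn_infty_iff_deriv_of_isOpen hI).1 hα).2

theorem smooth_hasDerivAt {I : Set ℝ} (hI : IsOpen I) {α : ℝ → Fin 4 → ℝ}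
    (hα : ContDiffOn ℝ (⊤ : ℕ∞) α I) {s : ℝ} (hs : s ∈ I) :
    HasDerivAt α (deriv α s) s :=
  (((contDiffOn_infty_iff_deriv_of_isOpen hI).1 hα).1.differentiableAt
    (hI.mem_nhds hs)).hasDerivAt

theorem null_orth {I : Set ℝ} (hI : IsOpen I) {α : ℝ → Fin 4 → ℝ}
    (hα : ContDiffOn ℝ (⊤ : ℕ∞) α I)
    (hnull : ∀ s ∈ I, B4 (deriv α s) (deriv α s) = 0) {s : ℝ} (hs : s ∈ I) :
    B4 (deriv (deriv α) s) (deriv α s) = 0 := by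
  have ha := smooth_hasDerivAt hI (smooth_deriv hI hα) hs
  have h := fun i => (hasDerivAt_pi.1 ha) i
  have h1 : HasDerivAt (fun u => B4 (deriv α u) (deriv α u)) _ s :=
    ((((h 0).mul (h 0)).neg.add ((h 1).mul (h 1))).add ((h 2).mul (h 2))).add ((h 3).mul (h 3))
  have h2 : HasDerivAt (fun u => B4 (deriv α u) (deriv α u)) 0 s :=
    (hasDerivAt_const s (0 : ℝ)).congr_of_eventuallyEq
      (Filter.eventually_of_mem (hI.mem_nhds hs) hnull)
  have h3 := h1.unique h2
  unfold B4
  linarith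

/-- the smooth factor -/
def Kfac (α β : ℝ → Fin 4 → ℝ) (s t : ℝ) : ℝ :=
  B4 (deriv (deriv α) s) (deriv (deriv β) t) / (B4 (deriv α s) (deriv β t)) ^ 2
    - B4 (deriv α s) (deriv (deriv β) t) * B4 (deriv (deriv α) s) (deriv β t)
      / (B4 (deriv α s) (deriv β t)) ^ 3

theorem mixed_formula (I₁ I₂ : Set ℝ) (hI₁ : IsOpen I₁) (hI₂ : IsOpen I₂)
    (α β : ℝ → Fin 4 → ℝ)
    (hα : ContDiffOn ℝ (⊤ : ℕ∞) α I₁) (hβ : ContDiffOn ℝ (⊤ : ℕ∞) β I₂)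
    (hneg : ∀ s ∈ I₁, ∀ t ∈ I₂, B4 (deriv α s) (deriv β t) < 0)
    {s t : ℝ} (hs : s ∈ I₁) (ht : t ∈ I₂) :
    pds (pdt (gaussMap α β)) s t =
      (1 / msq α β s t) • wedge (eta1 α β s t) (eta2 α β s t)
        + (msq α β s t * Kfac α β s t) • gaussMap α β s t := by
  have hb := smooth_hasDerivAt hI₂ (smooth_deriv hI₂ hβ) ht
  have ha := smooth_hasDerivAt hI₁ (smooth_deriv hI₁ hα) hs
  have hD := (hneg s hs t ht).ne
  have h1 := (gauss_ds (deriv β t) (deriv (deriv β) t) ha hD)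
  have h2 := h1.congr_of_eventuallyEq (f₁ := fun u => pdt (gaussMap α β) u t)
    (Filter.eventually_of_mem (hI₁.mem_nhds hs) fun u hu =>
      (gauss_dt (deriv α u) hb (hneg u hu t ht).ne).deriv)
  unfold pds
  rw [h2.deriv]
  ext i j
  simp only [Pi.add_apply, Pi.smul_apply, smul_eq_mul, gaussMap, msq, Kfac]
  simp only [wedge, eta1, eta2, Pi.sub_apply, Pi.smul_apply, smul_eq_mul,
    B4_comm' (deriv (deriv β) t) (deriv α s)]
  generalize B4 (deriv α s) (deriv β t) = D at *
  field_simp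
  ring

theorem wedge_eq_zero_of (a b p q : Fin 4 → ℝ) (k : ℝ) (ha : B4 a a = 0) (hD : B4 a b ≠ 0)
    (hpa : B4 p a = 0) (hpb : B4 p b = 0) (h : wedge p q = k • wedge a b) : k = 0 := by
  have h' : ∀ i j, p i * q j - p j * q i = k * (a i * b j - a j * b i) := fun i j =>
    congrFun (congrFun h i) j
  have key : B4 p a * B4 q b - B4 p b * B4 q a = k * (B4 a a * B4 b b - B4 a b * B4 a b) := by
    unfold B4
    linear_combination (-(a 0 * b 1 - a 1 * b 0)) * h' 0 1 - (a 0 * b 2 - a 2 * b 0) * h' 0 2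
      - (a 0 * b 3 - a 3 * b 0) * h' 0 3 + (a 1 * b 2 - a 2 * b 1) * h' 1 2
      + (a 1 * b 3 - a 3 * b 1) * h' 1 3 + (a 2 * b 3 - a 3 * b 2) * h' 2 3
  rw [hpa, hpb, ha] at key
  have : k * (B4 a b * B4 a b) = 0 := by linarith
  exact (mul_eq_zero.1 this).resolve_right (mul_ne_zero hD hD)

theorem B4_smooth {S : Set (ℝ × ℝ)} {f g : ℝ × ℝ → Fin 4 → ℝ}
    (hf : ContDiffOn ℝ (⊤ : ℕ∞) f S) (hg : ContDiffOn ℝ (⊤ : ℕ∞) g S) :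
    ContDiffOn ℝ (⊤ : ℕ∞) (fun x => B4 (f x) (g x)) S := by
  have h1 := fun i => (contDiffOn_pi.1 hf) i
  have h2 := fun i => (contDiffOn_pi.1 hg) i
  unfold B4
  exact ((((h1 0).mul (h2 0)).neg.add ((h1 1).mul (h2 1))).add ((h1 2).mul (h2 2))).add
    ((h1 3).mul (h2 3))

theorem Kfac_smooth (I₁ I₂ : Set ℝ) (hI₁ : IsOpen I₁) (hI₂ : IsOpen I₂)
    (α β : ℝ → Fin 4 → ℝ)
    (hα : ContDiffOn ℝ (⊤ : ℕ∞) α I₁) (hβ : ContDiffOn ℝ (⊤ : ℕ∞) β I₂)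
    (hneg : ∀ s ∈ I₁, ∀ t ∈ I₂, B4 (deriv α s) (deriv β t) < 0) :
    ContDiffOn ℝ (⊤ : ℕ∞) (fun x : ℝ × ℝ => Kfac α β x.1 x.2) (I₁ ×ˢ I₂) := by
  have c1 : ∀ {γ : ℝ → Fin 4 → ℝ}, ContDiffOn ℝ (⊤ : ℕ∞) γ I₁ →
      ContDiffOn ℝ (⊤ : ℕ∞) (fun x : ℝ × ℝ => γ x.1) (I₁ ×ˢ I₂) := fun h =>
    h.comp contDiff_fst.contDiffOn (fun x hx => hx.1)
  have c2 : ∀ {γ : ℝ → Fin 4 → ℝ}, ContDiffOn ℝ (⊤ : ℕ∞) γ I₂ →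
      ContDiffOn ℝ (⊤ : ℕ∞) (fun x : ℝ × ℝ => γ x.2) (I₁ ×ˢ I₂) := fun h =>
    h.comp contDiff_snd.contDiffOn (fun x hx => hx.2)
  have a1 := smooth_deriv hI₁ hα
  have p1 := c1 (smooth_deriv hI₁ a1)
  have b1 := smooth_deriv hI₂ hβ
  have q1 := c2 (smooth_deriv hI₂ b1)
  have hne : ∀ x ∈ I₁ ×ˢ I₂, B4 (deriv α x.1) (deriv β x.2) ≠ 0 := fun x hx =>
    (hneg _ hx.1 _ hx.2).ne
  have D1 := B4_smooth (c1 a1) (c2 b1)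
  unfold Kfac
  exact ((B4_smooth p1 q1).div (D1.pow 2) (fun x hx => pow_ne_zero 2 (hne x hx))).sub
    (((B4_smooth (c1 a1) q1).mul (B4_smooth p1 (c2 b1))).div (D1.pow 3)
      (fun x hx => pow_ne_zero 3 (hne x hx)))

/-- Pointwise 1-type Gauss map of the first kind is equivalent to flat normal
bundle: at each point, `∂²ν/∂s∂t` is a scalar multiple of `ν` iff `η₁ ∧ η₂ = 0`;
globally, `Δν = f·ν` for some smooth `f` iff `η₁ ∧ η₂` vanishes identically. -/
theorem pointwise_one_type_first_kind_iff_flat_normal_bundle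
    (I₁ I₂ : Set ℝ) (hI₁ : IsOpen I₁) (hI₂ : IsOpen I₂)
    (hI₁' : I₁.OrdConnected) (hI₂' : I₂.OrdConnected)
    (α β : ℝ → Fin 4 → ℝ)
    (hα : ContDiffOn ℝ (⊤ : ℕ∞) α I₁) (hβ : ContDiffOn ℝ (⊤ : ℕ∞) β I₂)
    (hαnull : ∀ s ∈ I₁, B4 (deriv α s) (deriv α s) = 0)
    (hβnull : ∀ t ∈ I₂, B4 (deriv β t) (deriv β t) = 0)
    (hneg : ∀ s ∈ I₁, ∀ t ∈ I₂, B4 (deriv α s) (deriv β t) < 0)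
    :
    (∀ s ∈ I₁, ∀ t ∈ I₂,
      ((∃ c : ℝ, pds (pdt (gaussMap α β)) s t = c • gaussMap α β s t) ↔
        wedge (eta1 α β s t) (eta2 α β s t) = 0)) ∧
    ((∃ f : ℝ → ℝ → ℝ, ContDiffOn ℝ (⊤ : ℕ∞) (Function.uncurry f) (I₁ ×ˢ I₂) ∧
        ∀ s ∈ I₁, ∀ t ∈ I₂, lap α β (gaussMap α β) s t = f s t • gaussMap α β s t) ↔
      (∀ s ∈ I₁, ∀ t ∈ I₂, wedge (eta1 α β s t) (eta2 α β s t) = 0)) := by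
  have hpt : ∀ s ∈ I₁, ∀ t ∈ I₂,
      ((∃ c : ℝ, pds (pdt (gaussMap α β)) s t = c • gaussMap α β s t) ↔
        wedge (eta1 α β s t) (eta2 α β s t) = 0) := by
    intro s hs t ht
    have hD := hneg s hs t ht
    have hm : msq α β s t ≠ 0 := neg_ne_zero.2 hD.ne
    rw [mixed_formula I₁ I₂ hI₁ hI₂ α β hα hβ hneg hs ht]
    constructor
    · rintro ⟨c, hc⟩
      have h1 : wedge (eta1 α β s t) (eta2 α β s t)
          = (c - msq α β s t * Kfac α β s t) • wedge (deriv α s) (deriv β t) := by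
        ext i j
        have := congrFun (congrFun hc i) j
        simp only [gaussMap, Pi.add_apply, Pi.smul_apply, smul_eq_mul] at this ⊢
        field_simp at this
        linarith
      have hk := wedge_eq_zero_of _ _ _ _ _ (hαnull s hs) hD.ne ?_ ?_ h1
      · rw [h1, hk, zero_smul]
      · have h0 := null_orth hI₁ hα hαnull hs
        have hz := hαnull s hs
        unfold eta1
        generalize B4 (deriv (deriv α) s) (deriv β t) / B4 (deriv α s) (deriv β t) = r
        simp only [B4, Pi.sub_apply, Pi.smul_apply, smul_eq_mul] at h0 hz ⊢
        linear_combination h0 - r * hz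
      · have h0 : B4 (deriv (deriv α) s) (deriv β t) / B4 (deriv α s) (deriv β t)
          * B4 (deriv α s) (deriv β t) = B4 (deriv (deriv α) s) (deriv β t) :=
          div_mul_cancel₀ _ hD.ne
        unfold eta1
        generalize B4 (deriv (deriv α) s) (deriv β t) / B4 (deriv α s) (deriv β t) = r at *
        simp only [B4, Pi.sub_apply, Pi.smul_apply, smul_eq_mul] at h0 ⊢
        linear_combination -h0
    · intro h
      exact ⟨msq α β s t * Kfac α β s t, by rw [h, smul_zero, zero_add]⟩
  refine ⟨hpt, ?_, ?_⟩
  · rintro ⟨f, -, hf⟩ s hs t ht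
    have hm : msq α β s t ≠ 0 := neg_ne_zero.2 (hneg s hs t ht).ne
    refine (hpt s hs t ht).1 ⟨msq α β s t / 2 * f s t, ?_⟩
    rw [mul_smul, ← hf s hs t ht, lap, smul_smul]
    have : msq α β s t / 2 * (2 / msq α β s t) = 1 := by field_simp
    rw [this, one_smul]
  · intro h
    refine ⟨fun s t => 2 * Kfac α β s t,
      contDiffOn_const.mul (Kfac_smooth I₁ I₂ hI₁ hI₂ α β hα hβ hneg), ?_⟩
    intro s hs t ht
    have hm : msq α β s t ≠ 0 := neg_ne_zero.2 (hneg s hs t ht).ne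
    rw [lap, mixed_formula I₁ I₂ hI₁ hI₂ α β hα hβ hneg hs ht, h s hs t ht, smul_zero, zero_add,
      smul_smul]
    congr 1
    field_simp
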